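/- arXiv:1506.06523 — 3 statements merged into one kernel-verified Lean document; each statement's English description precedes it below -/
import Mathlib

section
/- Let A be a unital complex C*-algebra, let a, b be positive invertible elements of A and let g ∈ A be invertible. Then d(g a g*, g b g*) = d(a, b), where d(a,b) = ‖log(a^{-1/2} b a^{-1/2})‖; i.e. the action g·a = g a g* of the invertible group on the cone of positive invertibles is isometric for the metric d. -/
/-- An element of a unital C*-algebra is *positive invertible* if it is self-adjoint
with spectrum contained in `(0, ∞)`. -/
def IsPosInv {A : Type*} [CStarAlgebra A] (a : A) : Prop :=
  IsSelfAdjoint a ∧ spectrum ℝ a ⊆ Set.Ioi (0 : ℝ)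

/-- Real powers `a ^ t` defined by the continuous functional calculus. -/
noncomputable def cpow {A : Type*} [CStarAlgebra A] (a : A) (t : ℝ) : A :=
  cfc (fun x : ℝ => x ^ t) a

/-- The logarithm defined by the continuous functional calculus. -/
noncomputable def clog {A : Type*} [CStarAlgebra A] (a : A) : A :=
  cfc Real.log a

/-- The metric `d(x, y) = ‖log (x^{-1/2} y x^{-1/2})‖` on positive invertible elements. -/
noncomputable def dd {A : Type*} [CStarAlgebra A] (x y : A) : ℝ :=
  ‖clog (cpow x (-(1/2)) * y * cpow x (-(1/2)))‖

/-- The geodesic `γ_{a,b}(t) = a^{1/2} (a^{-1/2} b a^{-1/2})^t a^{1/2}`. -/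
noncomputable def geo {A : Type*} [CStarAlgebra A] (a b : A) (t : ℝ) : A :=
  cpow a (1/2) * cpow (cpow a (-(1/2)) * b * cpow a (-(1/2))) t * cpow a (1/2)

/-- The distance from a point to a subset. -/
noncomputable def distSet {A : Type*} [CStarAlgebra A] (x : A) (C : Set A) : ℝ :=
  sInf {r : ℝ | ∃ c ∈ C, r = dd x c}

/-- The distance between two subsets. -/
noncomputable def distSets {A : Type*} [CStarAlgebra A] (C D : Set A) : ℝ :=
  sInf {r : ℝ | ∃ x ∈ C, ∃ y ∈ D, r = dd x y}

/-- The orbit `O_H(1) = {h h* : h ∈ H}` of the identity under the action `h · a = h a h*`. -/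
def orbitOne {A : Type*} [CStarAlgebra A] (H : Subgroup Aˣ) : Set A :=
  {x : A | ∃ h ∈ H, x = (h : A) * star (h : A)}

/-- The fixed point set `P^H = {a positive invertible : h a h* = a for all h ∈ H}`. -/
def fixedSet {A : Type*} [CStarAlgebra A] (H : Subgroup Aˣ) : Set A :=
  {a : A | IsPosInv a ∧ ∀ h ∈ H, (h : A) * a * star (h : A) = a}

/-- The similarity number `Sim(H) = inf {‖s‖ ‖s⁻¹‖ : s a unitarizer of H}`. -/
noncomputable def simNum {A : Type*} [CStarAlgebra A] (H : Subgroup Aˣ) : ℝ :=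
  sInf {c : ℝ | ∃ s : Aˣ, (∀ h ∈ H, (↑s⁻¹ : A) * (h : A) * (s : A) ∈ unitary A) ∧
    c = ‖(s : A)‖ * ‖(↑s⁻¹ : A)‖}

/-- The set of norms of elements of `H`; its supremum is the size `|H|`. -/
def normSet {A : Type*} [CStarAlgebra A] (H : Subgroup Aˣ) : Set ℝ :=
  {r : ℝ | ∃ h ∈ H, r = ‖(h : A)‖}

/-- The orbit diameter function `D_H(a) = sup_{h ∈ H} d(a, h a h*)`. -/
noncomputable def orbDiam {A : Type*} [CStarAlgebra A] (H : Subgroup Aˣ) (a : A) : ℝ :=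
  sSup {r : ℝ | ∃ h ∈ H, r = dd a ((h : A) * a * star (h : A))}

/-- The size `|p H q| = sup_{h ∈ H} ‖p h q‖` of the conjugated family `p H q`. -/
noncomputable def sizeConj {A : Type*} [CStarAlgebra A] (H : Subgroup Aˣ) (p q : A) : ℝ :=
  sSup {c : ℝ | ∃ h ∈ H, c = ‖p * (h : A) * q‖}

/-- The similarity number `Sim(p H q)` of the conjugated family `p H q`. -/
noncomputable def simConj {A : Type*} [CStarAlgebra A] (H : Subgroup Aˣ) (p q : A) : ℝ :=
  sInf {c : ℝ | ∃ u : Aˣ, (∀ h ∈ H, (↑u⁻¹ : A) * (p * (h : A) * q) * (u : A) ∈ unitary A) ∧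
    c = ‖(u : A)‖ * ‖(↑u⁻¹ : A)‖}

/-- The geodesic `γ_{r², s²}(t) = r (r⁻¹ s² r⁻¹)^t r` for positive invertible `r`, `s`. -/
noncomputable def gammaRS {A : Type*} [CStarAlgebra A] (r s : Aˣ) (t : ℝ) : A :=
  (r : A) * cpow ((↑r⁻¹ : A) * ((s : A) * (s : A)) * (↑r⁻¹ : A)) t * (r : A)

/-!
Since `a^{-1/2} b a^{-1/2}` is similar to `a⁻¹ b`, and a positive invertible `x` has
`‖log x‖ = sup {|log t| : t ∈ σ(x)}`, the distance `d(a, b)` depends only on the spectrum of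
`a⁻¹ b`. The action of `g` replaces `a⁻¹ b` by `(g*)⁻¹ (a⁻¹ b) g*`, which has the same spectrum.
-/

section Spectrum

variable {R A : Type*} [CommSemiring R] [Ring A] [Algebra R A]

lemma spectrum_mul_comm_of_isUnit {u : A} (hu : IsUnit u) (x : A) :
    spectrum R (u * x) = spectrum R (x * u) := by
  lift u to Aˣ using hu
  simpa [mul_assoc] using spectrum.units_conjugate (R := R) (a := x * u) (u := u)

lemma spectrum_units_inv_mul_mul_mul (g a h : Aˣ) (b : A) :
    spectrum R ((↑(g * a * h)⁻¹ : A) * (g * b * h)) = spectrum R ((↑a⁻¹ : A) * b) := by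
  simpa [mul_assoc] using spectrum.units_conjugate' (R := R) (a := (↑a⁻¹ : A) * b) (u := h)

end Spectrum

lemma norm_cfc_eq_norm_cfc_of_spectrum_eq {𝕜 A B : Type*} {p : A → Prop} {q : B → Prop} [RCLike 𝕜]
    [NormedRing A] [StarRing A] [NormedAlgebra 𝕜 A] [IsometricContinuousFunctionalCalculus 𝕜 A p]
    [NormedRing B] [StarRing B] [NormedAlgebra 𝕜 B] [IsometricContinuousFunctionalCalculus 𝕜 B q]
    (f : 𝕜 → 𝕜) {x : A} {y : B} (hx : p x) (hy : q y) (h : spectrum 𝕜 x = spectrum 𝕜 y) :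
    ‖cfc f x‖ = ‖cfc f y‖ := by
  by_cases hf : ContinuousOn f (spectrum 𝕜 x)
  · have hf' : ContinuousOn f (spectrum 𝕜 y) := h ▸ hf
    refine le_antisymm (norm_cfc_le (norm_nonneg _) fun t ht ↦ ?_)
      (norm_cfc_le (norm_nonneg _) fun t ht ↦ ?_)
    · exact norm_apply_le_norm_cfc f y (h ▸ ht)
    · exact norm_apply_le_norm_cfc f x (h ▸ ht)
  · rw [cfc_apply_of_not_continuousOn x hf, cfc_apply_of_not_continuousOn y (h ▸ hf),
      norm_zero, norm_zero]

section PosInv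

variable {A : Type*} [CStarAlgebra A] {a : A}

lemma isPosInv_iff_isStrictlyPositive [PartialOrder A] [StarOrderedRing A] :
    IsPosInv a ↔ IsStrictlyPositive a :=
  CStarAlgebra.isStrictlyPositive_iff_isSelfAdjoint_and_spectrum_pos.symm

lemma IsPosInv.isUnit (ha : IsPosInv a) : IsUnit a :=
  spectrum.isUnit_of_zero_notMem ℝ fun h ↦ Set.self_notMem_Ioi (ha.2 h)

lemma IsPosInv.conjugate (ha : IsPosInv a) {g : A} (hg : IsUnit g) :
    IsPosInv (g * a * star g) := by
  let := CStarAlgebra.spectralOrder A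
  have := CStarAlgebra.spectralOrderedRing A
  rw [isPosInv_iff_isStrictlyPositive] at ha ⊢
  exact hg.isStrictlyPositive_star_right_conjugate_iff.mpr ha

lemma isSelfAdjoint_cpow (a : A) (t : ℝ) : IsSelfAdjoint (cpow a t) :=
  cfc_predicate _ a

lemma IsPosInv.continuousOn_rpow (ha : IsPosInv a) (t : ℝ) :
    ContinuousOn (fun x : ℝ ↦ x ^ t) (spectrum ℝ a) :=
  continuousOn_id.rpow_const fun _ hx ↦ .inl (ha.2 hx).ne'

lemma IsPosInv.isUnit_cpow (ha : IsPosInv a) (t : ℝ) : IsUnit (cpow a t) :=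
  isUnit_cfc _ a (ha.continuousOn_rpow t) ha.1 fun _ hx ↦ (Real.rpow_pos_of_pos (ha.2 hx) t).ne'

lemma IsPosInv.cpow_add (ha : IsPosInv a) (s t : ℝ) :
    cpow a (s + t) = cpow a s * cpow a t := by
  unfold cpow
  rw [← cfc_mul _ _ a (ha.continuousOn_rpow s) (ha.continuousOn_rpow t)]
  exact cfc_congr fun _ hx ↦ Real.rpow_add (ha.2 hx) s t

lemma cpow_neg_one (a : Aˣ) (ha : IsSelfAdjoint (a : A)) : cpow (a : A) (-1) = ↑a⁻¹ := by
  simpa only [cpow, Real.rpow_neg_one] using cfc_inv_id (R := ℝ) a ha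

lemma spectrum_cpow_mul_mul_cpow {a : Aˣ} (ha : IsPosInv (a : A)) (b : A) :
    spectrum ℝ (cpow (a : A) (-(1/2)) * b * cpow (a : A) (-(1/2))) =
      spectrum ℝ ((↑a⁻¹ : A) * b) := by
  have sq_eq_inv : cpow (a : A) (-(1/2)) * cpow (a : A) (-(1/2)) = ↑a⁻¹ := by
    rw [← ha.cpow_add, ← cpow_neg_one a ha.1]
    norm_num
  rw [← spectrum_mul_comm_of_isUnit (ha.isUnit_cpow _), ← mul_assoc, sq_eq_inv]

lemma dd_eq_dd_of_spectrum_eq {a a' : Aˣ} {b b' : A} (ha : IsPosInv (a : A))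
    (ha' : IsPosInv (a' : A)) (hb : IsSelfAdjoint b) (hb' : IsSelfAdjoint b')
    (h : spectrum ℝ ((↑a⁻¹ : A) * b) = spectrum ℝ ((↑a'⁻¹ : A) * b')) :
    dd (a : A) b = dd (a' : A) b' :=
  norm_cfc_eq_norm_cfc_of_spectrum_eq Real.log (hb.conjugate_self (isSelfAdjoint_cpow _ _))
    (hb'.conjugate_self (isSelfAdjoint_cpow _ _)) <| by
      rw [spectrum_cpow_mul_mul_cpow ha, spectrum_cpow_mul_mul_cpow ha', h]

end PosInv

/-- The action `g · a = g a g*` is isometric for the metric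
`d(a, b) = ‖log (a^{-1/2} b a^{-1/2})‖`. -/
theorem stmt2 {A : Type*} [CStarAlgebra A] (a b : A) (ha : IsPosInv a) (hb : IsPosInv b)
    (g : Aˣ) :
    dd ((g : A) * a * star (g : A)) ((g : A) * b * star (g : A)) = dd a b := by
  lift a to Aˣ using ha.isUnit
  have hga : IsPosInv (↑(g * a * star g) : A) := ha.conjugate g.isUnit
  exact dd_eq_dd_of_spectrum_eq hga ha (hb.1.conjugate (g : A)) hb.1
    (spectrum_units_inv_mul_mul_mul g a (star g) b)
end

section
/- Let A be a unital complex C*-algebra and H a subgroup of Aˣ which is uniformly bounded, i.e. |H| = sup_{h∈H} ‖h‖ < ∞. Then the diameter of the orbit O_H(1) = {h h* : h ∈ H} with respect to the metric d(a,b) = ‖log(a^{-1/2} b a^{-1/2})‖ equals 2·log(|H|): sup{ d(a,b) : a, b ∈ O_H(1) } = 2·log(sup_{h∈H} ‖h‖). -/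
/-!
The action `h · a = h a h*` is isometric for `d`: the element `(h a h*)^{-1/2} h a^{1/2}` is a
unitary which conjugates `a^{-1/2} b a^{-1/2}` into the corresponding product for the translated
pair. Hence `d(h h*, k k*) = d(1, g g*)` with `g = h⁻¹ k ∈ H`. The spectrum of a positive
invertible `u` has maximum `‖u‖` and minimum `‖u⁻¹‖⁻¹`, so `‖log u‖ = max (log ‖u‖) (log ‖u⁻¹‖)`,
and the C*-identity gives `d(1, g g*) = 2 max (log ‖g‖) (log ‖g⁻¹‖)`. As `g` ranges over `H`, so
does `g⁻¹`, and the supremum is `2 log |H|`.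
-/

section OrderedCStarAlgebra

variable {A : Type*} [CStarAlgebra A] [PartialOrder A] [StarOrderedRing A] {a b : A}

theorem continuousOn_log_spectrum (ha : IsStrictlyPositive a) :
    ContinuousOn Real.log (spectrum ℝ a) :=
  Real.continuousOn_log.mono fun _ ht => (ha.spectrum_pos ht).ne'

theorem cfc_log_unitary_conj (ha : IsStrictlyPositive a) (v : unitary A) :
    CFC.log ((v : A) * a * star (v : A)) = v * CFC.log a * star (v : A) := by
  have hφ : Continuous (Unitary.conjStarAlgAut ℂ A v) := by
    change Continuous fun x : A => (v : A) * x * star (v : A)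
    fun_prop
  exact (StarAlgHomClass.map_cfc (R := ℝ) (S := ℂ) (Unitary.conjStarAlgAut ℂ A v) Real.log a
    (continuousOn_log_spectrum ha) hφ ha.isSelfAdjoint (ha.isSelfAdjoint.map _)).symm

theorem norm_cfc_log_unitary_conj (ha : IsStrictlyPositive a) (v : unitary A) :
    ‖CFC.log ((v : A) * a * star (v : A))‖ = ‖CFC.log a‖ := by
  rw [cfc_log_unitary_conj ha, CStarRing.norm_mul_mem_unitary _ (Unitary.star_mem v.2),
    CStarRing.norm_coe_unitary_mul]

theorem cfc_log_inv {u : Aˣ} (hu : IsStrictlyPositive (u : A)) :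
    CFC.log (↑u⁻¹ : A) = -CFC.log (u : A) := by
  have hcont : ContinuousOn Real.log ((·⁻¹) '' spectrum ℝ (u : A)) := by
    refine Real.continuousOn_log.mono ?_
    rintro _ ⟨t, ht, rfl⟩
    exact inv_ne_zero (hu.spectrum_pos ht).ne'
  rw [CFC.log, CFC.log, ← cfc_comp_inv Real.log u hcont hu.isSelfAdjoint]
  simp only [Real.log_inv, cfc_neg]

theorem log_norm_le_norm_cfc_log (ha : IsStrictlyPositive a) : Real.log ‖a‖ ≤ ‖CFC.log a‖ := by
  nontriviality A
  have hmem : ‖a‖ ∈ spectrum ℝ a := CStarAlgebra.norm_mem_spectrum_of_nonneg ha.nonneg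
  exact (Real.le_norm_self _).trans
    (norm_apply_le_norm_cfc Real.log a hmem (continuousOn_log_spectrum ha) ha.isSelfAdjoint)

theorem log_le_log_norm_of_mem_spectrum (ha : IsStrictlyPositive a) {t : ℝ}
    (ht : t ∈ spectrum ℝ a) : Real.log t ≤ Real.log ‖a‖ :=
  Real.log_le_log (ha.spectrum_pos ht) <|
    (Real.le_norm_self t).trans (IsometricContinuousFunctionalCalculus.norm_spectrum_le a ht
      ha.isSelfAdjoint)

theorem norm_cfc_log_eq_max {u : Aˣ} (hu : IsStrictlyPositive (u : A)) :
    ‖CFC.log (u : A)‖ = max (Real.log ‖(u : A)‖) (Real.log ‖(↑u⁻¹ : A)‖) := by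
  nontriviality A
  have hu' : IsStrictlyPositive (↑u⁻¹ : A) := by simpa only [Ring.inverse_unit] using hu.ringInverse
  apply le_antisymm
  · obtain ⟨t, ht, hnorm⟩ :=
      (IsGreatest.norm_cfc Real.log (u : A) (continuousOn_log_spectrum hu) hu.isSelfAdjoint).1
    have htinv : t⁻¹ ∈ spectrum ℝ (↑u⁻¹ : A) :=
      spectrum.inv_mem_iff (r := Units.mk0 t (hu.spectrum_pos ht).ne').1 ht
    calc ‖CFC.log (u : A)‖ = max (Real.log t) (Real.log t⁻¹) := by
          rw [CFC.log, ← hnorm, Real.log_inv]; rfl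
      _ ≤ max (Real.log ‖(u : A)‖) (Real.log ‖(↑u⁻¹ : A)‖) :=
          max_le_max (log_le_log_norm_of_mem_spectrum hu ht)
            (log_le_log_norm_of_mem_spectrum hu' htinv)
  · refine max_le (log_norm_le_norm_cfc_log hu) ?_
    simpa only [cfc_log_inv hu, norm_neg] using log_norm_le_norm_cfc_log hu'

theorem cpow_eq_rpow (ha : 0 ≤ a) (t : ℝ) : cpow a t = a ^ t :=
  (CFC.rpow_eq_cfc_real ha).symm

theorem dd_eq_norm_cfc_log (ha : 0 ≤ a) :
    dd a b = ‖CFC.log (a ^ (-(1 / 2) : ℝ) * b * a ^ (-(1 / 2) : ℝ))‖ := by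
  rw [dd, cpow_eq_rpow ha]
  rfl

theorem cfc_rpow_half_mul_self (ha : 0 ≤ a) : a ^ (1 / 2 : ℝ) * a ^ (1 / 2 : ℝ) = a := by
  rw [← CFC.sqrt_eq_rpow, CFC.sqrt_mul_sqrt_self a ha]

theorem conj_rpow_neg_half_mul_mul_rpow_half_mem_unitary (ha : IsStrictlyPositive a) {h : A}
    (hh : IsUnit h) :
    (h * a * star h) ^ (-(1 / 2) : ℝ) * h * a ^ (1 / 2 : ℝ) ∈ unitary A := by
  have hc : IsStrictlyPositive (h * a * star h) :=
    hh.isStrictlyPositive_star_right_conjugate_iff.2 ha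
  have hunit := ((hc.rpow _ (-(1 / 2) : ℝ)).isUnit.mul hh).mul (ha.rpow _ (1 / 2 : ℝ)).isUnit
  refine hunit.mem_unitary_of_mul_star_self ?_
  set p := (h * a * star h) ^ (-(1 / 2) : ℝ)
  set q := a ^ (1 / 2 : ℝ)
  have hp : star p = p := CFC.rpow_nonneg.star_eq
  have hq : star q = q := CFC.rpow_nonneg.star_eq
  calc p * h * q * star (p * h * q) = p * (h * (q * q) * star h) * p := by
        simp only [star_mul, hp, hq, mul_assoc]
    _ = p * (h * a * star h) * p := by rw [cfc_rpow_half_mul_self ha.nonneg]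
    _ = 1 := CFC.conjugate_rpow_neg_one_half _ hc

theorem dd_conj_conj (ha : IsStrictlyPositive a) (hb : IsStrictlyPositive b) {h : A}
    (hh : IsUnit h) : dd (h * a * star h) (h * b * star h) = dd a b := by
  set v := (h * a * star h) ^ (-(1 / 2) : ℝ) * h * a ^ (1 / 2 : ℝ) with hv
  have hv_mem : v ∈ unitary A := conj_rpow_neg_half_mul_mul_rpow_half_mem_unitary ha hh
  rw [dd_eq_norm_cfc_log (star_right_conjugate_nonneg ha.nonneg h), dd_eq_norm_cfc_log ha.nonneg]
  set p := (h * a * star h) ^ (-(1 / 2) : ℝ)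
  have hr := ha.rpow _ (-(1 / 2) : ℝ)
  set r := a ^ (-(1 / 2) : ℝ)
  have hp : star p = p := CFC.rpow_nonneg.star_eq
  have hvr : v * r = p * h := by rw [hv, mul_assoc, CFC.rpow_mul_rpow_neg _ ha, mul_one]
  have hconj : p * (h * b * star h) * p = v * (r * b * r) * star v :=
    calc p * (h * b * star h) * p = (p * h) * b * star (p * h) := by
          simp only [star_mul, hp, mul_assoc]
      _ = v * (r * b * r) * star v := by
          rw [← hvr]; simp only [star_mul, hr.isSelfAdjoint.star_eq, mul_assoc]
  have hrbr : IsStrictlyPositive (r * b * r) :=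
    hb.conjugate_of_isUnit_of_isSelfAdjoint _ _ hr.isUnit hr.isSelfAdjoint
  rw [hconj, norm_cfc_log_unitary_conj hrbr ⟨v, hv_mem⟩]

end OrderedCStarAlgebra

section Orbit

variable {A : Type*} [CStarAlgebra A]

theorem dd_one_left (b : A) : dd 1 b = ‖CFC.log b‖ := by
  rw [dd, cpow, cfc_apply_one, Real.one_rpow, map_one, one_mul, mul_one]
  rfl

theorem dd_one_mul_star (g : Aˣ) :
    dd 1 ((g : A) * star (g : A)) =
      2 * max (Real.log ‖(g : A)‖) (Real.log ‖(↑g⁻¹ : A)‖) := by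
  let _ := CStarAlgebra.spectralOrder A
  have := CStarAlgebra.spectralOrderedRing A
  have hpos : IsStrictlyPositive ((g * star g : Aˣ) : A) :=
    (g * star g).isStrictlyPositive_of_le (mul_star_self_nonneg (g : A))
  have hnorm : ‖((g * star g : Aˣ) : A)‖ = ‖(g : A)‖ ^ 2 := by
    rw [Units.val_mul, Units.coe_star, CStarRing.norm_self_mul_star, sq]
  have hnorm_inv : ‖(↑(g * star g)⁻¹ : A)‖ = ‖(↑g⁻¹ : A)‖ ^ 2 := by
    rw [mul_inv_rev, ← star_inv, Units.val_mul, Units.coe_star, CStarRing.norm_star_mul_self, sq]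
  calc dd 1 ((g : A) * star (g : A)) = ‖CFC.log ((g * star g : Aˣ) : A)‖ := dd_one_left _
    _ = max (Real.log (‖(g : A)‖ ^ 2)) (Real.log (‖(↑g⁻¹ : A)‖ ^ 2)) := by
        rw [norm_cfc_log_eq_max hpos, hnorm, hnorm_inv]
    _ = 2 * max (Real.log ‖(g : A)‖) (Real.log ‖(↑g⁻¹ : A)‖) := by
        rw [Real.log_pow, Real.log_pow, Nat.cast_ofNat, mul_max_of_nonneg _ _ zero_le_two]

theorem dd_mul_star_mul_star (h k : Aˣ) :
    dd ((h : A) * star (h : A)) ((k : A) * star (k : A)) =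
      dd 1 (((h⁻¹ * k : Aˣ) : A) * star ((h⁻¹ * k : Aˣ) : A)) := by
  let _ := CStarAlgebra.spectralOrder A
  have := CStarAlgebra.spectralOrderedRing A
  set g := h⁻¹ * k with hg
  have hgpos : IsStrictlyPositive ((g : A) * star (g : A)) :=
    (g * star g).isStrictlyPositive_of_le (mul_star_self_nonneg (g : A))
  have hk : (k : A) * star (k : A) = h * (g * star (g : A)) * star (h : A) := by
    rw [show k = h * g by rw [hg, mul_inv_cancel_left], Units.val_mul, star_mul]
    simp only [mul_assoc]
  simpa only [mul_one, ← hk] using dd_conj_conj isStrictlyPositive_one hgpos h.isUnit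

theorem one_le_of_isLUB_normSet [Nontrivial A] {H : Subgroup Aˣ} {M : ℝ}
    (hM : IsLUB (normSet H) M) : 1 ≤ M :=
  hM.1 ⟨1, H.one_mem, by rw [Units.val_one, norm_one]⟩

theorem isLUB_dd_orbitOne [Nontrivial A] {H : Subgroup Aˣ} {M : ℝ} (hM : IsLUB (normSet H) M) :
    IsLUB {r : ℝ | ∃ x ∈ orbitOne H, ∃ y ∈ orbitOne H, r = dd x y} (2 * Real.log M) := by
  have hlog : ∀ g ∈ H, Real.log ‖(g : A)‖ ≤ Real.log M := fun g hg =>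
    Real.log_le_log (norm_pos_iff.2 g.ne_zero) (hM.1 ⟨g, hg, rfl⟩)
  constructor
  · rintro _ ⟨_, ⟨h, hh, rfl⟩, _, ⟨k, hk, rfl⟩, rfl⟩
    have hg : h⁻¹ * k ∈ H := H.mul_mem (H.inv_mem hh) hk
    rw [dd_mul_star_mul_star, dd_one_mul_star]
    exact mul_le_mul_of_nonneg_left (max_le (hlog _ hg) (hlog _ (H.inv_mem hg))) zero_le_two
  · intro D hD
    have hnorm : ∀ g ∈ H, ‖(g : A)‖ ≤ Real.exp (D / 2) := fun g hg => by
      have hdist : dd 1 ((g : A) * star (g : A)) ≤ D :=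
        hD ⟨1, ⟨1, H.one_mem, by simp⟩, _, ⟨g, hg, rfl⟩, rfl⟩
      rw [dd_one_mul_star] at hdist
      rw [← Real.log_le_iff_le_exp (norm_pos_iff.2 g.ne_zero)]
      linarith [le_max_left (Real.log ‖(g : A)‖) (Real.log ‖(↑g⁻¹ : A)‖)]
    have hexp : M ≤ Real.exp (D / 2) := hM.2 fun _ ⟨g, hg, hr⟩ => hr ▸ hnorm g hg
    have hM_pos : 0 < M := zero_lt_one.trans_le (one_le_of_isLUB_normSet hM)
    linarith [(Real.log_le_iff_le_exp hM_pos).2 hexp]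

theorem normSet_nonempty (H : Subgroup Aˣ) : (normSet H).Nonempty :=
  ⟨_, 1, H.one_mem, rfl⟩

theorem dd_orbitOne_nonempty (H : Subgroup Aˣ) :
    {r : ℝ | ∃ x ∈ orbitOne H, ∃ y ∈ orbitOne H, r = dd x y}.Nonempty :=
  have hone : 1 * star 1 ∈ orbitOne H := ⟨1, H.one_mem, rfl⟩
  ⟨_, _, hone, _, hone, rfl⟩

end Orbit

/-- The diameter of the orbit `O_H(1)` equals `2 log |H|` for a uniformly bounded
group `H`. -/
theorem stmt6 {A : Type*} [CStarAlgebra A] (H : Subgroup Aˣ)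
    (hbdd : BddAbove (normSet H)) :
    sSup {r : ℝ | ∃ x ∈ orbitOne H, ∃ y ∈ orbitOne H, r = dd x y} =
      2 * Real.log (sSup (normSet H)) := by
  rcases subsingleton_or_nontrivial A with _ | _
  · have norm_eq_zero (a : A) : ‖a‖ = 0 := by rw [Subsingleton.elim a 0, norm_zero]
    have hnorms : normSet H = {0} :=
      Set.eq_singleton_iff_nonempty_unique_mem.2
        ⟨normSet_nonempty H, fun _ ⟨_, _, hr⟩ => hr ▸ norm_eq_zero _⟩
    have hdists : {r : ℝ | ∃ x ∈ orbitOne H, ∃ y ∈ orbitOne H, r = dd x y} = {0} :=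
      Set.eq_singleton_iff_nonempty_unique_mem.2
        ⟨dd_orbitOne_nonempty H, fun _ ⟨_, _, _, _, hr⟩ => hr ▸ norm_eq_zero _⟩
    rw [hdists, hnorms, csSup_singleton, Real.log_zero, mul_zero]
  · exact (isLUB_dd_orbitOne (isLUB_csSup (normSet_nonempty H) hbdd)).csSup_eq
      (dd_orbitOne_nonempty H)
end

section
/- Let ℋ be a separable complex Hilbert space, A ⊆ B(ℋ) a von Neumann algebra, and H a subgroup of the invertible elements of A. Assume the fixed point set P^H ∩ A = {a ∈ A : a positive invertible, h a h* = a for all h ∈ H} is nonempty. Then for every positive invertible b ∈ A there exists a ∈ P^H ∩ A such that d(b,a) = dist(b, P^H ∩ A), i.e. the distance from b to the fixed point set is attained, where d(x,y) = ‖log(x^{-1/2} y x^{-1/2})‖. -/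
open ContinuousLinearMapWOT Filter Set Topology
open scoped ComplexOrder InnerProductSpace

/-! The closed ball of radius `r` about `b` for the metric `dd` is the order interval
`[exp (-r) • b, exp r • b]`. An order interval of operators is bounded in norm and closed in the
weak operator topology, hence compact there, so `dd b` is lower semicontinuous with compact
sublevel sets and attains its minimum on the positive invertible part of any closed set. A von
Neumann algebra is closed because it is a commutant, and the equations `h * a * star h = a` are
linear in `a` with weak operator continuous sides. -/

theorem conjugate_le_conjugate_iff_of_isUnit {R : Type*} [Ring R] [StarRing R] [PartialOrder R]
    [StarOrderedRing R] {u a b : R} (hu : IsUnit u) (hsa : IsSelfAdjoint u) :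
    u * a * u ≤ u * b * u ↔ a ≤ b := by
  have h := hu.star_right_conjugate_nonneg_iff (x := b - a)
  rwa [hsa.star_eq, mul_sub, sub_mul, sub_nonneg, sub_nonneg] at h

section CStarAlgebra

variable {A : Type*} [CStarAlgebra A] {x y : A} {r : ℝ}

theorem dd_nonneg : 0 ≤ dd x y := norm_nonneg _

theorem distSet_eq_of_isMinOn {C : Set A} (hy : y ∈ C) (hmin : IsMinOn (dd x) C y) :
    distSet x C = dd x y := by
  refine IsLeast.csInf_eq ⟨⟨y, hy, rfl⟩, ?_⟩
  rintro _ ⟨c, hc, rfl⟩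
  exact hmin hc

variable [PartialOrder A] [StarOrderedRing A]

theorem isPosInv_iff_isStrictlyPositive_s8 : IsPosInv x ↔ IsStrictlyPositive x :=
  ⟨fun hx ↦ (StarOrderedRing.isStrictlyPositive_iff_spectrum_pos x hx.1).2 hx.2,
    fun hx ↦ ⟨hx.isSelfAdjoint, fun _ ↦ hx.spectrum_pos⟩⟩

theorem norm_clog_le_iff (hx : IsPosInv x) (hr : 0 ≤ r) :
    ‖clog x‖ ≤ r ↔
      x ∈ Icc (algebraMap ℝ A (Real.exp (-r))) (algebraMap ℝ A (Real.exp r)) := by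
  have log_continuousOn : ContinuousOn Real.log (spectrum ℝ x) :=
    Real.continuousOn_log.mono fun t ht ↦ (hx.2 ht).ne'
  rw [clog, norm_cfc_le_iff Real.log x hr log_continuousOn hx.1, mem_Icc,
    algebraMap_le_iff_le_spectrum hx.1, le_algebraMap_iff_spectrum_le hx.1, ← forall₂_and]
  refine forall₂_congr fun t ht ↦ ?_
  have t_pos : 0 < t := hx.2 ht
  rw [Real.norm_eq_abs, abs_le, Real.le_log_iff_exp_le t_pos, Real.log_le_iff_le_exp t_pos]

theorem dd_le_iff (hx : IsPosInv x) (hy : IsPosInv y) (hr : 0 ≤ r) :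
    dd x y ≤ r ↔ y ∈ Icc (Real.exp (-r) • x) (Real.exp r • x) := by
  rw [isPosInv_iff_isStrictlyPositive_s8] at hx hy
  have cpow_eq : cpow x (-(1 / 2)) = x ^ (-(1 / 2) : ℝ) := (CFC.rpow_eq_cfc_real hx.nonneg).symm
  set u : A := x ^ (-(1 / 2) : ℝ)
  have u_isUnit : IsUnit u := (CFC.isUnit_rpow_iff x _ (by norm_num)).2 hx.isUnit
  have u_isSelfAdjoint : IsSelfAdjoint u := CFC.rpow_nonneg.isSelfAdjoint
  have conjugate_smul (k : ℝ) : u * (k • x) * u = algebraMap ℝ A k := by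
    rw [mul_smul_comm, smul_mul_assoc, CFC.conjugate_rpow_neg_one_half x,
      Algebra.algebraMap_eq_smul_one]
  have conjugate_isPosInv : IsPosInv (u * y * u) := isPosInv_iff_isStrictlyPositive_s8.2
    (hy.conjugate_of_isUnit_of_isSelfAdjoint y u u_isUnit u_isSelfAdjoint)
  rw [dd, cpow_eq, norm_clog_le_iff conjugate_isPosInv hr, ← conjugate_smul, ← conjugate_smul,
    mem_Icc, mem_Icc, conjugate_le_conjugate_iff_of_isUnit u_isUnit u_isSelfAdjoint,
    conjugate_le_conjugate_iff_of_isUnit u_isUnit u_isSelfAdjoint]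

theorem IsPosInv.of_mem_Icc_smul {s t : ℝ} (hx : IsPosInv x) (hs : 0 < s)
    (hy : y ∈ Icc (s • x) (t • x)) : IsPosInv y := by
  rw [isPosInv_iff_isStrictlyPositive_s8] at hx ⊢
  exact .of_le (hx.smul hs) hy.1

end CStarAlgebra

section WeakOperatorTopology

variable {𝕜 E : Type*} [RCLike 𝕜] [NormedAddCommGroup E] [NormedSpace 𝕜 E]

theorem isClosed_toCLM_preimage_centralizer (S : Set (E →L[𝕜] E)) :
    IsClosed (toCLM ⁻¹' S.centralizer : Set (E →WOT[𝕜] E)) := by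
  have eq_centralizer :
      (toCLM ⁻¹' S.centralizer : Set (E →WOT[𝕜] E)) = (ofCLM '' S).centralizer := by
    ext T
    simp only [mem_preimage, mem_centralizer_iff, forall_mem_image, toCLM_mul,
      ← toCLM_injective.eq_iff]
  rw [eq_centralizer]
  exact isClosed_centralizer _

theorem isClosed_toCLM_preimage_setOf_forall_mul_mul_eq {ι : Type*} (s : Set ι)
    (a b : ι → E →L[𝕜] E) :
    IsClosed (toCLM ⁻¹' {T | ∀ i ∈ s, a i * T * b i = T} : Set (E →WOT[𝕜] E)) := by
  have eq_iInter : (toCLM ⁻¹' {T | ∀ i ∈ s, a i * T * b i = T} : Set (E →WOT[𝕜] E)) =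
      ⋂ i ∈ s, {T | ofCLM (a i) * T * ofCLM (b i) = T} := by
    ext T
    simp [← toCLM_injective.eq_iff]
  rw [eq_iInter]
  exact isClosed_biInter fun i _ ↦ isClosed_eq (by fun_prop) continuous_id

variable {F : Type*} [NormedAddCommGroup F] [InnerProductSpace 𝕜 F] [CompleteSpace F]

theorem exists_clm_of_tendsto_inner {ι : Type*} {l : Filter ι} [l.NeBot]
    {T : ι → E →L[𝕜] F} {B : E → F → 𝕜} {r : ℝ} (hr : 0 ≤ r) (hT : ∀ᶠ i in l, ‖T i‖ ≤ r)
    (hB : ∀ x y, Tendsto (fun i ↦ ⟪T i x, y⟫_𝕜) l (𝓝 (B x y))) :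
    ∃ a : E →L[𝕜] F, ‖a‖ ≤ r ∧ ∀ x y, ⟪a x, y⟫_𝕜 = B x y := by
  have B_bound (x : E) (y : F) : ‖B x y‖ ≤ r * ‖x‖ * ‖y‖ := by
    refine le_of_tendsto (hB x y).norm (hT.mono fun i hi ↦ (norm_inner_le_norm _ _).trans ?_)
    gcongr
    exact (T i).le_of_opNorm_le hi x
  let L : E →ₗ⋆[𝕜] F →ₗ[𝕜] 𝕜 := LinearMap.mk₂'ₛₗ (starRingEnd 𝕜) (RingHom.id 𝕜) B
    (fun x x' y ↦ tendsto_nhds_unique (hB _ _)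
      (by simpa [inner_add_left] using (hB x y).add (hB x' y)))
    (fun c x y ↦ tendsto_nhds_unique (hB _ _)
      (by simpa [inner_smul_left] using (hB x y).const_mul (starRingEnd 𝕜 c)))
    (fun x y y' ↦ tendsto_nhds_unique (hB _ _)
      (by simpa [inner_add_right] using (hB x y).add (hB x y')))
    (fun c x y ↦ tendsto_nhds_unique (hB _ _)
      (by simpa [inner_smul_right] using (hB x y).const_mul c))
  let riesz : StrongDual 𝕜 F →L⋆[𝕜] F :=
    (InnerProductSpace.toDual 𝕜 F).symm.toLinearIsometry.toContinuousLinearMap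
  refine ⟨riesz.comp (L.mkContinuous₂ r B_bound),
    ContinuousLinearMap.opNorm_le_bound _ hr fun x ↦ ?_,
    fun x y ↦ InnerProductSpace.toDual_symm_apply⟩
  calc ‖riesz (L.mkContinuous₂ r B_bound x)‖ = ‖L.mkContinuous₂ r B_bound x‖ :=
        (InnerProductSpace.toDual 𝕜 F).symm.norm_map _
    _ ≤ r * ‖x‖ := ContinuousLinearMap.opNorm_le_bound _ (by positivity) (B_bound x)

theorem isCompact_toCLM_preimage_closedBall (r : ℝ) :
    IsCompact (toCLM ⁻¹' Metric.closedBall 0 r : Set (E →WOT[𝕜] F)) := by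
  rw [isCompact_iff_ultrafilter_le_nhds]
  intro U hU
  have norm_le : ∀ᶠ T : E →WOT[𝕜] F in U, ‖T.toCLM‖ ≤ r :=
    mem_of_superset (le_principal_iff.1 hU) fun T hT ↦ mem_closedBall_zero_iff.1 hT
  have r_nonneg : 0 ≤ r := norm_le.exists.elim fun T hT ↦ (norm_nonneg _).trans hT
  have exists_lim (x : E) (y : F) :
      ∃ z, Tendsto (fun T : E →WOT[𝕜] F ↦ ⟪T x, y⟫_𝕜) U (𝓝 z) := by
    have mem_ball : ∀ᶠ T : E →WOT[𝕜] F in U,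
        ⟪T x, y⟫_𝕜 ∈ Metric.closedBall (0 : 𝕜) (r * ‖x‖ * ‖y‖) := by
      refine norm_le.mono fun T hT ↦ mem_closedBall_zero_iff.2 ((norm_inner_le_norm _ _).trans ?_)
      gcongr
      exact T.toCLM.le_of_opNorm_le hT x
    obtain ⟨z, -, hz⟩ := (isCompact_closedBall _ _).ultrafilter_le_nhds
      (U.map fun T : E →WOT[𝕜] F ↦ ⟪T x, y⟫_𝕜) (le_principal_iff.2 mem_ball)
    exact ⟨z, hz⟩
  choose B hB using exists_lim
  obtain ⟨a, ha_norm, ha⟩ := exists_clm_of_tendsto_inner r_nonneg norm_le hB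
  refine ⟨ofCLM a, by simpa using ha_norm,
    le_nhds_iff_forall_inner_apply_le_nhds.2 fun x y ↦ ?_⟩
  have h := (RCLike.continuous_conj.tendsto _).comp (hB x y)
  rw [← ha] at h
  simpa [Function.comp_def, Tendsto] using h

end WeakOperatorTopology

section LoewnerOrder

variable {𝕜 E : Type*} [RCLike 𝕜] [NormedAddCommGroup E] [InnerProductSpace 𝕜 E]

theorem isClosed_toCLM_preimage_Ici_zero :
    IsClosed (toCLM ⁻¹' Ici 0 : Set (E →WOT[𝕜] E)) := by
  have inner_right (x y : E) : Continuous fun T : E →WOT[𝕜] E ↦ ⟪x, T y⟫_𝕜 :=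
    continuous_dual_apply y (innerSL 𝕜 x)
  have inner_left (x y : E) : Continuous fun T : E →WOT[𝕜] E ↦ ⟪T x, y⟫_𝕜 := by
    simpa only [RCLike.star_def, inner_conj_symm] using (inner_right y x).star
  have eq_inter : (toCLM ⁻¹' Ici 0 : Set (E →WOT[𝕜] E)) =
      (⋂ x, ⋂ y, {T | ⟪T x, y⟫_𝕜 = ⟪x, T y⟫_𝕜}) ∩ ⋂ x, {T | 0 ≤ ⟪T x, x⟫_𝕜} := by
    ext T
    simp [ContinuousLinearMap.nonneg_iff_isPositive, ContinuousLinearMap.isPositive_iff,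
      LinearMap.IsSymmetric]
  rw [eq_inter]
  exact (isClosed_iInter fun x ↦ isClosed_iInter fun y ↦
    isClosed_eq (inner_left x y) (inner_right x y)).inter
      (isClosed_iInter fun x ↦ isClosed_le continuous_const (inner_left x x))

theorem isClosed_toCLM_preimage_Icc (a b : E →L[𝕜] E) :
    IsClosed (toCLM ⁻¹' Icc a b : Set (E →WOT[𝕜] E)) := by
  have eq_inter : (toCLM ⁻¹' Icc a b : Set (E →WOT[𝕜] E)) =
      (· - ofCLM a) ⁻¹' (toCLM ⁻¹' Ici 0) ∩ (ofCLM b - ·) ⁻¹' (toCLM ⁻¹' Ici 0) := by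
    ext T
    simp [ContinuousLinearMap.le_def]
  rw [eq_inter]
  exact (isClosed_toCLM_preimage_Ici_zero.preimage (by fun_prop)).inter
    (isClosed_toCLM_preimage_Ici_zero.preimage (by fun_prop))

end LoewnerOrder

section HilbertSpace

variable {E : Type*} [NormedAddCommGroup E] [InnerProductSpace ℂ E] [CompleteSpace E]

theorem isCompact_toCLM_preimage_Icc (a b : E →L[ℂ] E) :
    IsCompact (toCLM ⁻¹' Icc a b : Set (E →WOT[ℂ] E)) := by
  refine (isCompact_toCLM_preimage_closedBall (‖b - a‖ + ‖a‖)).of_isClosed_subset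
    (isClosed_toCLM_preimage_Icc a b) fun T hT ↦ mem_closedBall_zero_iff.2 ?_
  calc ‖T.toCLM‖ = ‖T.toCLM - a + a‖ := by rw [sub_add_cancel]
    _ ≤ ‖T.toCLM - a‖ + ‖a‖ := norm_add_le _ _
    _ ≤ ‖b - a‖ + ‖a‖ := by
      gcongr
      exact CStarAlgebra.norm_le_norm_of_nonneg_of_le (sub_nonneg.2 hT.1) (sub_le_sub_right hT.2 a)

theorem isClosed_toCLM_preimage_vonNeumannAlgebra (A : VonNeumannAlgebra E) :
    IsClosed (toCLM ⁻¹' A : Set (E →WOT[ℂ] E)) := by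
  rw [← A.centralizer_centralizer]
  exact isClosed_toCLM_preimage_centralizer _

theorem lowerSemicontinuousOn_dd_toCLM {b : E →L[ℂ] E} (hb : IsPosInv b) :
    LowerSemicontinuousOn (fun T : E →WOT[ℂ] E ↦ dd b T.toCLM) {T | IsPosInv T.toCLM} := by
  refine lowerSemicontinuousOn_iff_preimage_Iic.2 fun r ↦ ?_
  rcases lt_or_ge r 0 with hr | hr
  · refine ⟨∅, isClosed_empty, ?_⟩
    ext T
    simpa using fun _ ↦ hr.trans_le dd_nonneg
  · refine ⟨_, isClosed_toCLM_preimage_Icc (Real.exp (-r) • b) (Real.exp r • b), ?_⟩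
    ext T
    exact and_congr_right fun hT ↦ dd_le_iff hb hT hr

theorem stmt8_general {S : Set (E →L[ℂ] E)} (hS : IsClosed (toCLM ⁻¹' S : Set (E →WOT[ℂ] E)))
    (hne : {a ∈ S | IsPosInv a}.Nonempty) {b : E →L[ℂ] E} (hb : IsPosInv b) :
    ∃ a ∈ {a ∈ S | IsPosInv a}, dd b a = distSet b {a ∈ S | IsPosInv a} := by
  obtain ⟨c, hcS, hc⟩ := hne
  let I : Set (E →L[ℂ] E) := Icc (Real.exp (-dd b c) • b) (Real.exp (dd b c) • b)
  have mem_I_iff {a : E →L[ℂ] E} (ha : IsPosInv a) : a ∈ I ↔ dd b a ≤ dd b c :=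
    (dd_le_iff hb ha dd_nonneg).symm
  have isPosInv_of_mem_I {a : E →L[ℂ] E} (ha : a ∈ I) : IsPosInv a :=
    hb.of_mem_Icc_smul (Real.exp_pos _) ha
  let K : Set (E →WOT[ℂ] E) := toCLM ⁻¹' I ∩ toCLM ⁻¹' S
  have K_compact : IsCompact K := (isCompact_toCLM_preimage_Icc _ _).inter_right hS
  have K_nonempty : K.Nonempty := ⟨ofCLM c, (mem_I_iff hc).2 le_rfl, hcS⟩
  obtain ⟨T, ⟨hTI, hTS⟩, hT⟩ := ((lowerSemicontinuousOn_dd_toCLM hb).mono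
    fun T hT ↦ isPosInv_of_mem_I hT.1).exists_isMinOn K_nonempty K_compact
  have T_isPosInv : IsPosInv T.toCLM := isPosInv_of_mem_I hTI
  have T_mem : T.toCLM ∈ {a ∈ S | IsPosInv a} := ⟨hTS, T_isPosInv⟩
  have T_isMinOn : IsMinOn (dd b) {a ∈ S | IsPosInv a} T.toCLM := by
    rintro a ⟨haS, ha⟩
    rcases le_total (dd b a) (dd b c) with h | h
    · exact hT (a := ofCLM a) ⟨(mem_I_iff ha).2 h, haS⟩
    · exact ((mem_I_iff T_isPosInv).1 hTI).trans h
  exact ⟨T.toCLM, T_mem, (distSet_eq_of_isMinOn T_mem T_isMinOn).symm⟩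

end HilbertSpace

/-- In a von Neumann algebra on a separable Hilbert space, the distance from a
positive invertible `b` to a nonempty fixed point set `P^H ∩ A` is attained. -/
theorem stmt8 {E : Type*} [NormedAddCommGroup E] [InnerProductSpace ℂ E] [CompleteSpace E]
    [TopologicalSpace.SeparableSpace E] (A : VonNeumannAlgebra E)
    (H : Subgroup (E →L[ℂ] E)ˣ)
    (hHA : ∀ h ∈ H, ((h : (E →L[ℂ] E)ˣ) : E →L[ℂ] E) ∈ A)
    (hne : Set.Nonempty {a : E →L[ℂ] E | a ∈ A ∧ IsPosInv a ∧
      ∀ h ∈ H, (h : E →L[ℂ] E) * a * star (h : E →L[ℂ] E) = a})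
    (b : E →L[ℂ] E) (hbA : b ∈ A) (hb : IsPosInv b) :
    ∃ a ∈ {a : E →L[ℂ] E | a ∈ A ∧ IsPosInv a ∧
        ∀ h ∈ H, (h : E →L[ℂ] E) * a * star (h : E →L[ℂ] E) = a},
      dd b a = distSet b {a : E →L[ℂ] E | a ∈ A ∧ IsPosInv a ∧
        ∀ h ∈ H, (h : E →L[ℂ] E) * a * star (h : E →L[ℂ] E) = a} := by
  have S_isClosed : IsClosed (toCLM ⁻¹' (A ∩ {a | ∀ h ∈ H,
      (h : E →L[ℂ] E) * a * star (h : E →L[ℂ] E) = a}) : Set (E →WOT[ℂ] E)) :=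
    (isClosed_toCLM_preimage_vonNeumannAlgebra A).inter
      (isClosed_toCLM_preimage_setOf_forall_mul_mul_eq (H : Set (E →L[ℂ] E)ˣ) Units.val
        fun h ↦ star (h : E →L[ℂ] E))
  simp only [and_comm (a := IsPosInv _), ← and_assoc] at hne ⊢
  exact stmt8_general S_isClosed hne hb
end
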